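/- Let Y be a complex Hilbert space and C ⊆ Y ⊕ Y a selfadjoint relation (C = C*). Let U be the closure in Y of the pre-set [Y]C = {u : ∃ v, (u,v) ∈ C}. Then there exists a selfadjoint linear operator S : [Y]C ⊆ U → U (densely defined in U, with S = S* as a relation in U ⊕ U) such that C = S ⊕ ({0} × U^⊥), i.e. C = {(u, Su + n) : u ∈ [Y]C, n ∈ U^⊥}. -/

import Mathlib

open scoped ComplexInnerProductSpace

/-- The pre-set `[Y]C = {u : ∃ v, (u,v) ∈ C}` of a relation `C ⊆ Y ⊕ Y`. -/
def preSet {Y : Type*} [NormedAddCommGroup Y] [InnerProductSpace ℂ Y]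
    (C : Set (Y × Y)) : Set Y :=
  {u | ∃ v, (u, v) ∈ C}

/-- The adjoint relation `C* = {(v,−u) : (u,v) ∈ C}^⊥` (orthogonal complement in `Y ⊕ Y`):
`(x,y) ∈ C*` iff `⟪v,x⟫ = ⟪u,y⟫` for all `(u,v) ∈ C`. -/
def adjointRel {Y : Type*} [NormedAddCommGroup Y] [InnerProductSpace ℂ Y]
    (C : Set (Y × Y)) : Set (Y × Y) :=
  {q | ∀ p ∈ C, (⟪p.2, q.1⟫ : ℂ) = ⟪p.1, q.2⟫}

/-- **[Arens 1961, Theorem 5.3].** Let `C ⊆ Y ⊕ Y` be a selfadjoint relation and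
`U := closure([Y]C)`. Then there is a selfadjoint linear operator `S : [Y]C ⊆ U → U`
(selfadjoint as a relation in `U ⊕ U`) such that `C = S ⊕ ({0} × U^⊥)`, i.e.
`C = {(u, Su + n) : u ∈ [Y]C, n ∈ U^⊥}`. -/
theorem arens_decomposition {Y : Type*} [NormedAddCommGroup Y] [InnerProductSpace ℂ Y]
    [CompleteSpace Y] (C : Set (Y × Y)) (hC : C = adjointRel C) :
    ∃ S : Y → Y,
      -- `S` maps `[Y]C` into `U`
      (∀ u ∈ preSet C, S u ∈ closure (preSet C)) ∧
      -- `S` is linear on `[Y]C`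
      (∀ u ∈ preSet C, ∀ v ∈ preSet C, u + v ∈ preSet C ∧ S (u + v) = S u + S v) ∧
      (∀ c : ℂ, ∀ u ∈ preSet C, c • u ∈ preSet C ∧ S (c • u) = c • S u) ∧
      -- `S` is selfadjoint as a relation in `U ⊕ U`: its graph coincides with its adjoint
      -- relation, the orthogonal complement being taken in `U ⊕ U`
      ({p : Y × Y | p.1 ∈ preSet C ∧ p.2 = S p.1} =
        {q : Y × Y | q.1 ∈ closure (preSet C) ∧ q.2 ∈ closure (preSet C) ∧
          ∀ u ∈ preSet C, (⟪S u, q.1⟫ : ℂ) = ⟪u, q.2⟫}) ∧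
      -- `C = S ⊕ ({0} × U^⊥)`
      C = {q : Y × Y | ∃ u ∈ preSet C, ∃ n : Y,
        (∀ y ∈ closure (preSet C), (⟪y, n⟫ : ℂ) = 0) ∧ q = (u, S u + n)} := by
  have mC : ∀ x y : Y, (x, y) ∈ C ↔ ∀ p ∈ C, (⟪p.2, x⟫ : ℂ) = ⟪p.1, y⟫ := by
    intro x y
    constructor
    · intro h
      rw [hC] at h
      exact h
    · intro h
      rw [hC]
      exact h
  have cadd : ∀ a b c d : Y, (a, b) ∈ C → (c, d) ∈ C → (a + c, b + d) ∈ C := by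
    intro a b c d h1 h2
    rw [mC] at h1 h2 ⊢
    intro p hp
    rw [inner_add_right, inner_add_right, h1 p hp, h2 p hp]
  have csmul : ∀ (k : ℂ) (a b : Y), (a, b) ∈ C → (k • a, k • b) ∈ C := by
    intro k a b h1
    rw [mC] at h1 ⊢
    intro p hp
    rw [inner_smul_right, inner_smul_right, h1 p hp]
  have czero : ((0 : Y), (0 : Y)) ∈ C := by
    rw [mC]
    intro p hp
    simp
  have csub : ∀ a b d : Y, (a, b) ∈ C → (a, d) ∈ C → ((0 : Y), b - d) ∈ C := by
    intro a b d h1 h2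
    have := cadd _ _ _ _ h1 (csmul (-1) _ _ h2)
    simpa [sub_eq_add_neg] using this
  let D : Submodule ℂ Y :=
    { carrier := preSet C
      add_mem' := by
        rintro a b ⟨v, hv⟩ ⟨w, hw⟩
        exact ⟨v + w, cadd _ _ _ _ hv hw⟩
      zero_mem' := ⟨0, czero⟩
      smul_mem' := by
        rintro k a ⟨v, hv⟩
        exact ⟨k • v, csmul _ _ _ hv⟩ }
  let U : Submodule ℂ Y := D.topologicalClosure
  have hU : ∀ x, x ∈ U ↔ x ∈ closure (preSet C) := fun x => Iff.rfl
  have hUc : IsClosed (U : Set Y) := D.isClosed_topologicalClosure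
  haveI : CompleteSpace U := hUc.completeSpace_coe
  have hDU : ∀ u ∈ preSet C, u ∈ U := fun u hu => subset_closure hu
  have perp : ∀ w : Y, ((0 : Y), w) ∈ C → ∀ y ∈ U, (⟪y, w⟫ : ℂ) = 0 := by
    intro w hw y hy
    have h0 : ∀ y ∈ preSet C, (⟪y, w⟫ : ℂ) = 0 := by
      rintro y ⟨z, hz⟩
      have := (mC _ _).1 hw _ hz
      simpa using this.symm
    have hcl : IsClosed {y : Y | (⟪y, w⟫ : ℂ) = 0} :=
      isClosed_eq (by fun_prop) continuous_const
    exact closure_minimal (s := preSet C) h0 hcl hy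
  have addn : ∀ u v n : Y, (u, v) ∈ C → (∀ y ∈ U, (⟪y, n⟫ : ℂ) = 0) → (u, v + n) ∈ C := by
    intro u v n h hn
    rw [mC] at h ⊢
    intro p hp
    rw [inner_add_right, hn p.1 (hDU _ ⟨p.2, hp⟩), add_zero, h p hp]
  have uniq : ∀ u v w : Y, (u, v) ∈ C → (u, w) ∈ C → v ∈ U → w ∈ U → v = w := by
    intro u v w h1 h2 hv hw
    have := perp _ (csub _ _ _ h1 h2) (v - w) (U.sub_mem hv hw)
    exact sub_eq_zero.1 (inner_self_eq_zero.1 this)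
  have ex : ∀ u : Y, ∃ w : Y, u ∈ preSet C → w ∈ U ∧ (u, w) ∈ C := by
    intro u
    by_cases hu : u ∈ preSet C
    · obtain ⟨v, hv⟩ := hu
      refine ⟨U.starProjection v, fun _ => ⟨U.starProjection_apply_mem v, ?_⟩⟩
      have := addn u v (-(v - U.starProjection v)) hv (by
        intro y hy
        rw [inner_neg_right, neg_eq_zero]
        exact (Submodule.mem_orthogonal _ _).1 (U.sub_starProjection_mem_orthogonal v) y hy)
      simpa using this
    · exact ⟨0, fun h => absurd h hu⟩
  choose S hS using ex
  have decomp : ∀ p ∈ C, ∀ y ∈ U, (⟪y, p.2 - S p.1⟫ : ℂ) = 0 := by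
    intro p hp
    exact perp _ (csub p.1 _ _ hp (hS _ ⟨p.2, hp⟩).2)
  refine ⟨S, fun u hu => (hS u hu).1, ?_, ?_, ?_, ?_⟩
  · intro u hu v hv
    have h := D.add_mem (x := u) (y := v) hu hv
    refine ⟨h, ?_⟩
    exact uniq _ _ _ (hS _ h).2 (cadd _ _ _ _ (hS _ hu).2 (hS _ hv).2) (hS _ h).1
      (U.add_mem (hS _ hu).1 (hS _ hv).1)
  · intro c u hu
    have h := D.smul_mem (x := u) c hu
    refine ⟨h, ?_⟩
    exact uniq _ _ _ (hS _ h).2 (csmul _ _ _ (hS _ hu).2) (hS _ h).1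
      (U.smul_mem c (hS _ hu).1)
  · ext ⟨a, b⟩
    constructor
    · rintro ⟨ha, hb⟩
      simp only at ha hb
      subst hb
      exact ⟨hDU _ ha, (hS _ ha).1, fun u hu => (mC _ _).1 (hS _ ha).2 _ (hS _ hu).2⟩
    · rintro ⟨ha, hb, h⟩
      simp only at ha hb h
      have hab : (a, b) ∈ C := by
        rw [mC]
        intro p hp
        have h1 := decomp p hp a ha
        rw [inner_eq_zero_symm, inner_sub_left, sub_eq_zero] at h1
        rw [h1]
        exact h _ ⟨p.2, hp⟩
      have ha' : a ∈ preSet C := ⟨b, hab⟩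
      exact ⟨ha', uniq _ _ _ hab (hS _ ha').2 hb (hS _ ha').1⟩
  · ext ⟨a, b⟩
    constructor
    · intro h
      exact ⟨a, ⟨b, h⟩, b - S a, decomp _ h, by simp⟩
    · rintro ⟨u, hu, n, hn, h⟩
      rw [h]
      exact addn _ _ _ (hS _ hu).2 hn
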